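/- Let α be a type and let R, Ro be binary relations on α satisfying the outermost local commutation property: whenever Ro G H and R G J with H ≠ J, either Ro J H, or there exists K with R H K and Ro J K. Then for all single steps, the one-step diagram extends to arbitrary reduction sequences in the following quantitative form: for all n, m and all G, H, J with G Ro^n H and G R^m J, there exist K, k, l with H R^k K and J Ro^l K such that m + l − (n + k) ≥ 0, i.e., n + k ≤ m + l; in particular, taking n = 1 and m = 1, whenever Ro G H and R G J with H ≠ J, either Ro J H or there exists K with H R^1 K and J Ro^1 K. -/

import Mathlib

/-- `NSteps R n x y` : there is a chain `x = f 0, f 1, …, f n = y` with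
`R (f i) (f (i+1))` for each `i < n`, i.e. an `n`-step `R`-reduction sequence. -/
def NSteps {α : Type*} (R : α → α → Prop) (n : ℕ) (x y : α) : Prop :=
  ∃ f : ℕ → α, f 0 = x ∧ f n = y ∧ ∀ i < n, R (f i) (f (i + 1))

namespace NSteps

variable {α : Type*} {R : α → α → Prop} {n m : ℕ} {x y z : α}

theorem refl (R : α → α → Prop) (x : α) : NSteps R 0 x x :=
  ⟨fun _ => x, rfl, rfl, fun _ h => absurd h (Nat.not_lt_zero _)⟩

theorem eq_of_zero (h : NSteps R 0 x y) : x = y := by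
  obtain ⟨f, rfl, rfl, -⟩ := h
  rfl

theorem head (hxy : R x y) (h : NSteps R n y z) : NSteps R (n + 1) x z := by
  obtain ⟨f, rfl, rfl, hf⟩ := h
  refine ⟨fun i => Nat.casesOn i x f, rfl, rfl, fun i hi => ?_⟩
  cases i with
  | zero => exact hxy
  | succ i => exact hf i (by omega)

theorem exists_head (h : NSteps R (n + 1) x z) : ∃ y, R x y ∧ NSteps R n y z := by
  obtain ⟨f, rfl, rfl, hf⟩ := h
  exact ⟨f 1, hf 0 (Nat.succ_pos n), fun i => f (i + 1), rfl, rfl,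
    fun i hi => hf (i + 1) (by omega)⟩

theorem single (h : R x y) : NSteps R 1 x y := head h (refl R y)

theorem trans (hxy : NSteps R n x y) (hyz : NSteps R m y z) : NSteps R (n + m) x z := by
  induction n generalizing x with
  | zero => rwa [hxy.eq_of_zero, Nat.zero_add]
  | succ n ih =>
    obtain ⟨w, hxw, hwy⟩ := hxy.exists_head
    rw [Nat.add_right_comm]
    exact head hxw (ih hwy)

end NSteps

section Commutation

variable {α : Type*} {R Ro : α → α → Prop}

/-- A single outermost step against an arbitrary reduction sequence. -/
theorem NSteps.outermost_strip
    (hcomm : ∀ G H J, Ro G H → R G J → H ≠ J → Ro J H ∨ ∃ K, R H K ∧ Ro J K)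
    {m : ℕ} {G H J : α} (hGH : Ro G H) (hGJ : NSteps R m G J) :
    ∃ (K : α) (k l : ℕ), NSteps R k H K ∧ NSteps Ro l J K ∧ 1 + k ≤ m + l := by
  induction m generalizing G H with
  | zero =>
    rw [← hGJ.eq_of_zero]
    exact ⟨H, 0, 1, refl R H, single hGH, by omega⟩
  | succ m ih =>
    obtain ⟨G', hGG', hG'J⟩ := hGJ.exists_head
    by_cases hne : H = G'
    · subst hne
      exact ⟨J, m, 0, hG'J, refl Ro J, by omega⟩
    obtain hG'H | ⟨L, hHL, hG'L⟩ := hcomm G H G' hGH hGG' hne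
    · obtain ⟨K, k, l, hHK, hJK, hle⟩ := ih hG'H hG'J
      exact ⟨K, k, l, hHK, hJK, by omega⟩
    · obtain ⟨K, k, l, hLK, hJK, hle⟩ := ih hG'L hG'J
      exact ⟨K, k + 1, l, head hHL hLK, hJK, by omega⟩

theorem NSteps.outermost_commute
    (hcomm : ∀ G H J, Ro G H → R G J → H ≠ J → Ro J H ∨ ∃ K, R H K ∧ Ro J K)
    {n m : ℕ} {G H J : α} (hGH : NSteps Ro n G H) (hGJ : NSteps R m G J) :
    ∃ (K : α) (k l : ℕ), NSteps R k H K ∧ NSteps Ro l J K ∧ n + k ≤ m + l := by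
  induction n generalizing m G J with
  | zero =>
    rw [← hGH.eq_of_zero]
    exact ⟨J, m, 0, hGJ, refl Ro J, by omega⟩
  | succ n ih =>
    obtain ⟨G', hGG', hG'H⟩ := hGH.exists_head
    obtain ⟨L, p, q, hG'L, hJL, hpq⟩ := outermost_strip hcomm hGG' hGJ
    obtain ⟨K, k, l, hHK, hLK, hkl⟩ := ih hG'H hG'L
    exact ⟨K, k, q + l, hHK, hJL.trans hLK, by omega⟩

end Commutation

theorem outermost_commutation_quantitative
    {α : Type*} (R Ro : α → α → Prop)
    (hcomm : ∀ G H J, Ro G H → R G J → H ≠ J →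
      Ro J H ∨ ∃ K, R H K ∧ Ro J K) :
    (∀ (n m : ℕ) (G H J : α), NSteps Ro n G H → NSteps R m G J →
      ∃ (K : α) (k l : ℕ), NSteps R k H K ∧ NSteps Ro l J K ∧ n + k ≤ m + l) ∧
    (∀ G H J : α, Ro G H → R G J → H ≠ J →
      Ro J H ∨ ∃ K, NSteps R 1 H K ∧ NSteps Ro 1 J K) := by
  refine ⟨fun n m G H J hGH hGJ => NSteps.outermost_commute hcomm hGH hGJ,
    fun G H J hGH hGJ hne => (hcomm G H J hGH hGJ hne).imp_right ?_⟩
  rintro ⟨K, hHK, hJK⟩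
  exact ⟨K, NSteps.single hHK, NSteps.single hJK⟩
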